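/- Let θ_1, …, θ_r be real polynomials in the variables w_1, …, w_k, let e_1, …, e_k denote the standard basis vectors of ℝ^k and O the origin, and let V ⊆ ℝ^k be the convex hull of the union of {O, e_1, …, e_k} with the set of all exponent vectors (i_1, …, i_k) such that w_1^{i_1}⋯w_k^{i_k} appears with nonzero coefficient in some θ_j. If y ∈ ℝ^r is a regular value of the map f = (θ_1, …, θ_r) : ℝ^k → ℝ^r, then f⁻¹(y) has at most 2^k · k! · vol_k(V) connected components, where vol_k denotes k-dimensional Lebesgue measure. -/

import Mathlib

open MeasureTheory ENNReal

/-!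
Writing `g = ∑ j, (θ j - y j) ^ 2`, the fibre is the zero set of the nonnegative polynomial `g`,
whose exponents lie in `2 V`. Pick one zero in each of finitely many connected components. For small
`ε` and `a` near `0`, the function `g + ε ‖w - a‖²` has a local minimum near each of these
components, and these minima are distinct. By Sard's theorem a generic `a` makes all of them
nondegenerate critical points off the coordinate hyperplanes. Multiplied by the coordinates, the
critical equations become a square system with exponents in `2 V`, so it remains to bound the number
of nondegenerate zeros of a square system with exponents in a convex body `W` by `k! vol W`.

For the last bound, let `F` be the system and choose for each of `n` zeros a polynomial that is
nonzero there and vanishes at the others. The products of these `n` polynomials with the monomials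
of degree at most `m` in `F` are linearly independent, because `F` is a local coordinate system at
each of the zeros. They have exponents in `(n + m) W`. Comparing dimensions, `n * (m + k).choose k`
is at most the number of lattice points of `(n + m) W`, and letting `m` tend to infinity gives
`n / k! ≤ vol W`.
-/

section

open MvPolynomial Filter Topology Pointwise
open Function (Injective Surjective)
open scoped Function Nat Polynomial

variable {R A σ τ : Type*}

section Homogeneous

lemma aeval_mul_left_of_isHomogeneous [CommSemiring R] [CommSemiring A] [Algebra R A]
    {P : MvPolynomial σ R} {n : ℕ} (hP : P.IsHomogeneous n) (r : A) (G : σ → A) :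
    aeval (fun i => r * G i) P = r ^ n * aeval G P := by
  simp only [aeval_def, eval₂_eq, Finset.mul_sum]
  refine Finset.sum_congr rfl fun a ha => ?_
  have hdeg : ∑ i ∈ a.support, a i = n := (hP.degree_eq_sum_deg_support ha).symm
  simp only [mul_pow, Finset.prod_mul_distrib, Finset.prod_pow_eq_pow_sum, hdeg]
  ring

variable [CommRing R] [CommRing A] [Algebra R A]

lemma pow_dvd_aeval_mul_left {P : MvPolynomial σ R} {n : ℕ}
    (hP : ∀ e < n, homogeneousComponent e P = 0) (r : A) (G : σ → A) :
    r ^ n ∣ aeval (fun i => r * G i) P := by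
  rw [← sum_homogeneousComponent P, map_sum]
  refine Finset.dvd_sum fun e _ => ?_
  rcases lt_or_ge e n with he | he
  · simp [hP e he]
  · rw [aeval_mul_left_of_isHomogeneous (homogeneousComponent_isHomogeneous e P)]
    exact (pow_dvd_pow r he).mul_right _

lemma pow_succ_dvd_aeval_mul_left_sub {P : MvPolynomial σ R} {n : ℕ}
    (hP : ∀ e < n, homogeneousComponent e P = 0) (r : A) (G : σ → A) :
    r ^ (n + 1) ∣
      aeval (fun i => r * G i) P - r ^ n * aeval G (homogeneousComponent n P) := by
  rw [← aeval_mul_left_of_isHomogeneous (homogeneousComponent_isHomogeneous n P), ← map_sub]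
  refine pow_dvd_aeval_mul_left (fun e he => ?_) r G
  rw [map_sub, homogeneousComponent_of_mem (homogeneousComponent_mem n P)]
  rcases (Nat.lt_succ_iff_lt_or_eq.mp he) with h | rfl
  · rw [hP e h, if_neg h.ne, sub_zero]
  · rw [if_pos rfl, sub_self]

end Homogeneous

section Jacobian

/-- The Jacobian matrix at the point `q` of the polynomial map with components `F j`. -/
noncomputable def jacobianMatrix [CommSemiring R] (F : τ → MvPolynomial σ R) (q : σ → R) :
    Matrix τ σ R :=
  Matrix.of fun j i => eval q (pderiv i (F j))

/-- Restriction of a polynomial to the parametrized line `t ↦ q + t • v`. -/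
noncomputable def lineRestriction [CommSemiring R] (q v : σ → R) : MvPolynomial σ R →ₐ[R] R[X] :=
  aeval fun i => Polynomial.C (q i) + Polynomial.X * Polynomial.C (v i)

lemma coeff_zero_aeval [CommSemiring R] (G : τ → R[X]) (P : MvPolynomial τ R) :
    (aeval G P).coeff 0 = eval (fun j => (G j).coeff 0) P := by
  induction P using MvPolynomial.induction_on with
  | C a => simp
  | add p p' hp hp' => simp [hp, hp']
  | mul_X p i hp => simp [Polynomial.mul_coeff_zero, hp]

lemma coeff_zero_lineRestriction [CommSemiring R] (q v : σ → R) (p : MvPolynomial σ R) :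
    (lineRestriction q v p).coeff 0 = eval q p := by
  simp [lineRestriction, coeff_zero_aeval]

lemma coeff_one_lineRestriction [CommSemiring R] [Fintype σ] (q v : σ → R)
    (p : MvPolynomial σ R) :
    (lineRestriction q v p).coeff 1 = ∑ i, eval q (pderiv i p) * v i := by
  classical
  induction p using MvPolynomial.induction_on with
  | C a => simp [lineRestriction]
  | add p p' hp hp' => simp [hp, hp', add_mul, Finset.sum_add_distrib]
  | mul_X p i hp =>
    have hX : lineRestriction q v (X i) = Polynomial.C (q i) + Polynomial.X * Polynomial.C (v i) :=
      aeval_X ..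
    rw [map_mul, Polynomial.mul_coeff_one, hp, coeff_zero_lineRestriction, hX]
    simp [Derivation.leibniz, pderiv_X, Pi.single_apply, add_mul, Finset.sum_add_distrib,
      Finset.sum_mul, Polynomial.coeff_C, apply_ite, mul_right_comm, mul_comm (q i)]

/-- At a zero of `F` with surjective Jacobian, the coordinates `F j` are analytically independent:
only the lowest-order forms survive in the first nontrivial coefficient along a line. -/
lemma sum_eval_smul_homogeneousComponent_eq_zero [CommRing R] [IsDomain R] [Infinite R] [Fintype σ]
    {ι : Type*} [Fintype ι] {F : τ → MvPolynomial σ R} {q : σ → R} (hF : ∀ j, eval q (F j) = 0)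
    (hJ : Surjective (jacobianMatrix F q).mulVec) {d : ℕ} (h : ι → MvPolynomial σ R)
    {P : ι → MvPolynomial τ R} (hP : ∀ i, ∀ e < d, homogeneousComponent e (P i) = 0)
    (hsum : ∑ i, h i * aeval F (P i) = 0) :
    ∑ i, eval q (h i) • homogeneousComponent d (P i) = 0 := by
  refine MvPolynomial.funext fun u => ?_
  obtain ⟨v, rfl⟩ := hJ u
  set G : τ → R[X] := fun j => (lineRestriction q v (F j)).divX
  have hline : (fun j => lineRestriction q v (F j)) = fun j => Polynomial.X * G j := by
    ext1 j
    simpa [coeff_zero_lineRestriction, hF] using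
      (Polynomial.X_mul_divX_add (lineRestriction q v (F j))).symm
  have hG : (fun j => (G j).coeff 0) = (jacobianMatrix F q).mulVec v := by
    ext1 j
    exact (Polynomial.coeff_divX ..).trans (coeff_one_lineRestriction q v (F j))
  have hdvd : Polynomial.X ^ (d + 1) ∣ Polynomial.X ^ d *
      ∑ i, lineRestriction q v (h i) * aeval G (homogeneousComponent d (P i)) := by
    have hzero := congrArg (lineRestriction q v) hsum
    simp only [map_sum, map_mul, comp_aeval_apply, hline, map_zero] at hzero
    rw [← dvd_neg, ← zero_sub, ← hzero, Finset.mul_sum, ← Finset.sum_sub_distrib]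
    refine Finset.dvd_sum fun i _ => ?_
    rw [mul_left_comm, ← mul_sub]
    exact (pow_succ_dvd_aeval_mul_left_sub (hP i) Polynomial.X G).mul_left _
  have hcoeff := Polynomial.X_pow_dvd_iff.mp hdvd d d.lt_succ_self
  simpa [Polynomial.coeff_X_pow_mul', Polynomial.finsetSum_coeff, Polynomial.mul_coeff_zero,
    coeff_zero_lineRestriction, coeff_zero_aeval, hG, smul_eval] using hcoeff

end Jacobian

section RootCount

lemma prod_pow_mem_pow_sum {ι : Type*} [CommSemiring R] [CommSemiring A] [Algebra R A]
    {M : Submodule R A} {s : Finset ι} {f : ι → A} (hf : ∀ i ∈ s, f i ∈ M) (e : ι → ℕ) :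
    ∏ i ∈ s, f i ^ e i ∈ M ^ ∑ i ∈ s, e i := by
  classical
  induction s using Finset.induction_on with
  | empty => simpa using (Submodule.one_le (P := (1 : Submodule R A))).mp le_rfl
  | insert a s ha ih =>
    rw [Finset.prod_insert ha, Finset.sum_insert ha, pow_add]
    exact Submodule.mul_mem_mul (Submodule.pow_mem_pow M (hf a (Finset.mem_insert_self a s)) _)
      (ih fun i hi => hf i (Finset.mem_insert_of_mem hi))

lemma aeval_mem_pow_of_totalDegree_le [CommSemiring R] [CommSemiring A] [Algebra R A]
    {M : Submodule R A} (h1 : 1 ≤ M) {F : σ → A} (hF : ∀ i, F i ∈ M) {P : MvPolynomial σ R}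
    {m : ℕ} (hP : P.totalDegree ≤ m) : aeval F P ∈ M ^ m := by
  rw [aeval_def, eval₂_eq]
  refine Submodule.sum_mem _ fun a ha => ?_
  rw [← Algebra.smul_def]
  exact Submodule.smul_mem _ _ <| pow_le_pow_right' h1 ((le_totalDegree ha).trans hP) <|
    prod_pow_mem_pow_sum (fun i _ => hF i) a

variable {K ι : Type*} [Field K] [Fintype ι]

lemma exists_totalDegree_le_one_eval_eq_zero_eval_ne_zero {p q : σ → K} (hpq : p ≠ q) :
    ∃ l : MvPolynomial σ K, l.totalDegree ≤ 1 ∧ eval p l = 0 ∧ eval q l ≠ 0 := by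
  obtain ⟨s, hs⟩ := Function.ne_iff.mp hpq
  exact ⟨X s - C (p s), (totalDegree_sub_C_le _ _).trans (totalDegree_X s).le, by simp,
    by simpa [sub_eq_zero] using hs.symm⟩

lemma exists_totalDegree_le_card_eval_ne_zero_iff_eq {q : ι → σ → K} (hq : Injective q) (i : ι) :
    ∃ h : MvPolynomial σ K, h.totalDegree ≤ Fintype.card ι ∧
      ∀ j, eval (q j) h ≠ 0 ↔ j = i := by
  classical
  choose! l hdeg hl hl' using fun j (hj : j ≠ i) =>
    exists_totalDegree_le_one_eval_eq_zero_eval_ne_zero (hq.ne hj)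
  refine ⟨∏ j ∈ Finset.univ.erase i, l j, ?_, fun j => ⟨?_, ?_⟩⟩
  · calc (∏ j ∈ Finset.univ.erase i, l j).totalDegree
        ≤ ∑ j ∈ Finset.univ.erase i, (l j).totalDegree := totalDegree_finsetProd _ _
      _ ≤ ∑ j ∈ Finset.univ.erase i, 1 :=
        Finset.sum_le_sum fun j hj => hdeg j (Finset.ne_of_mem_erase hj)
      _ ≤ Fintype.card ι := by simp
  · contrapose!
    intro hj
    rw [map_prod]
    exact Finset.prod_eq_zero (Finset.mem_erase.mpr ⟨hj, Finset.mem_univ j⟩) (hl j hj)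
  · rintro rfl
    rw [map_prod]
    exact Finset.prod_ne_zero_iff.mpr fun j' hj' => hl' j' (Finset.ne_of_mem_erase hj')

variable [Infinite K] [Fintype σ]

lemma eq_zero_of_sum_mul_aeval_eq_zero {F : τ → MvPolynomial σ K} {q : ι → σ → K}
    (hF : ∀ i j, eval (q i) (F j) = 0) (hJ : ∀ i, Surjective (jacobianMatrix F (q i)).mulVec)
    {h : ι → MvPolynomial σ K} (hh : ∀ i j, eval (q j) (h i) ≠ 0 ↔ j = i)
    {P : ι → MvPolynomial τ K} (hsum : ∑ i, h i * aeval F (P i) = 0) : P = 0 := by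
  classical
  suffices hcomp : ∀ d i, homogeneousComponent d (P i) = 0 by
    ext1 i
    rw [← sum_homogeneousComponent (P i)]
    exact Finset.sum_eq_zero fun d _ => hcomp d i
  intro d
  induction d using Nat.strong_induction_on with
  | _ d ih =>
    intro j
    have hlow := sum_eval_smul_homogeneousComponent_eq_zero (hF j) (hJ j) h
      (fun i e he => ih e he i) hsum
    rw [Finset.sum_eq_single_of_mem j (Finset.mem_univ j) fun i _ hij => by
      rw [not_not.mp fun hne => hij ((hh i j).mp hne).symm, zero_smul]] at hlow
    exact (smul_eq_zero.mp hlow).resolve_left ((hh j j).mpr rfl)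

lemma card_mul_finrank_restrictTotalDegree_le [Finite τ] {M : Submodule K (MvPolynomial σ K)}
    [Module.Finite K M] (h1 : 1 ≤ M) (hX : ∀ i, X i ∈ M) {F : τ → MvPolynomial σ K}
    (hFM : ∀ j, F j ∈ M) {q : ι → σ → K} (hq : Injective q) (hF : ∀ i j, eval (q i) (F j) = 0)
    (hJ : ∀ i, Surjective (jacobianMatrix F (q i)).mulVec) (m : ℕ) :
    Fintype.card ι * Module.finrank K (restrictTotalDegree τ K m) ≤
      Module.finrank K ↥(M ^ (Fintype.card ι + m)) := by
  choose h hdeg hh using exists_totalDegree_le_card_eval_ne_zero_iff_eq hq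
  let T : (ι → restrictTotalDegree τ K m) →ₗ[K] MvPolynomial σ K :=
    ∑ i, LinearMap.mulLeft K (h i) ∘ₗ (aeval F).toLinearMap ∘ₗ
      (restrictTotalDegree τ K m).subtype ∘ₗ LinearMap.proj i
  have hT (P) : T P = ∑ i, h i * aeval F (P i : MvPolynomial τ K) := by simp [T]
  have hinj : Injective T := (injective_iff_map_eq_zero T).mpr fun P hP => by
    have hzero := eq_zero_of_sum_mul_aeval_eq_zero hF hJ hh ((hT P).symm.trans hP)
    exact _root_.funext fun i => Subtype.ext (congrFun hzero i)
  have hmem (P) : T P ∈ M ^ (Fintype.card ι + m) := by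
    rw [hT, pow_add]
    refine Submodule.sum_mem _ fun i _ => Submodule.mul_mem_mul ?_ <|
      aeval_mem_pow_of_totalDegree_le h1 hFM ((mem_restrictTotalDegree τ m _).mp (P i).2)
    simpa using aeval_mem_pow_of_totalDegree_le h1 hX (hdeg i)
  have : Module.Finite K ↥(M ^ (Fintype.card ι + m)) :=
    Module.Finite.of_fg (Submodule.FG.pow (Module.Finite.iff_fg.mp ‹_›) _)
  have hle := LinearMap.finrank_le_finrank_of_injective
    (f := T.codRestrict (M ^ (Fintype.card ι + m)) hmem) (hinj.codRestrict hmem)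
  simpa [Module.finrank_pi_fintype] using hle

end RootCount

section Counting

lemma finrank_restrictTotalDegree [CommRing R] [Nontrivial R] [Fintype σ] (m : ℕ) :
    Module.finrank R (restrictTotalDegree σ R m) =
      (m + Fintype.card σ).choose (Fintype.card σ) := by
  classical
  have hunion : {a : σ →₀ ℕ | (a.sum fun _ e => e) ≤ m} = ((Finset.range (m + 1)).biUnion
      fun n => Finset.univ.finsuppAntidiag n : Finset (σ →₀ ℕ)) := by
    ext a
    simp [Finsupp.sum_fintype]
  have hdisj : ((Finset.range (m + 1) : Finset ℕ) : Set ℕ).PairwiseDisjoint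
      fun n => (Finset.univ : Finset σ).finsuppAntidiag n := fun n _ n' _ hne =>
    Finset.disjoint_left.mpr fun a ha ha' =>
      hne ((Finset.mem_finsuppAntidiag.mp ha).1.symm.trans (Finset.mem_finsuppAntidiag.mp ha').1)
  rw [restrictTotalDegree, Module.finrank_eq_nat_card_basis (basisRestrictSupport R _), hunion,
    Nat.card_coe_set_eq, Set.ncard_coe_finset, Finset.card_biUnion hdisj,
    ← Nat.sum_range_multichoose]
  simp [Finset.card_finsuppAntidiag_nat_eq_multichoose]

lemma pow_div_factorial_le_finrank_restrictTotalDegree [CommRing R] [Nontrivial R] [Fintype σ]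
    (m : ℕ) :
    (m : ℝ) ^ Fintype.card σ / (Fintype.card σ)! ≤
      Module.finrank R (restrictTotalDegree σ R m) := by
  rw [finrank_restrictTotalDegree]
  refine le_trans ?_ (Nat.pow_le_choose (Fintype.card σ) (m + Fintype.card σ))
  gcongr
  lia

end Counting

section NewtonSpace

/-- The exponent of a monomial, seen as a vector with real coordinates. -/
def exponentVector (σ : Type*) : (σ →₀ ℕ) →+ (σ → ℝ) where
  toFun a i := a i
  map_zero' := by ext; simp
  map_add' a b := by ext; simp

@[simp]
lemma exponentVector_apply (a : σ →₀ ℕ) (i : σ) : exponentVector σ a i = a i := rfl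

lemma exponentVector_injective : Injective (exponentVector σ) := fun _ _ hab =>
  Finsupp.ext fun i => Nat.cast_injective (R := ℝ) (congrFun hab i)

@[simp]
lemma exponentVector_single [DecidableEq σ] (i : σ) (n : ℕ) :
    exponentVector σ (Finsupp.single i n) = Pi.single i (n : ℝ) := by
  ext j
  simp [Finsupp.single_apply, Pi.single_apply, eq_comm]

variable (R) in
/-- The polynomials over `R` all of whose exponents lie in `S`, for instance those whose Newton
polytope is contained in a given polytope `S`. -/
noncomputable def newtonSpace [CommSemiring R] (S : Set (σ → ℝ)) : Submodule R (MvPolynomial σ R) :=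
  restrictSupport R (exponentVector σ ⁻¹' S)

section CommSemiring

variable [CommSemiring R] {S T : Set (σ → ℝ)}

lemma newtonSpace_mul_le : newtonSpace R S * newtonSpace R T ≤ newtonSpace R (S + T) := by
  rw [newtonSpace, newtonSpace, ← restrictSupport_add]
  exact restrictSupport_mono R (Set.preimage_add_preimage_subset (exponentVector σ))

lemma monomial_mem_newtonSpace {a : σ →₀ ℕ} (ha : exponentVector σ a ∈ S) (r : R) :
    monomial a r ∈ newtonSpace R S :=
  (monomial_mem_restrictSupport R).mpr (Or.inl ha)

lemma C_mem_newtonSpace (h0 : 0 ∈ S) (r : R) : C r ∈ newtonSpace R S :=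
  monomial_mem_newtonSpace (by simpa using h0) r

lemma one_le_newtonSpace (h0 : 0 ∈ S) : 1 ≤ newtonSpace R S :=
  Submodule.one_le.mpr (by simpa using C_mem_newtonSpace (R := R) h0 1)

lemma X_mem_newtonSpace [DecidableEq σ] {i : σ} (hi : Pi.single i 1 ∈ S) :
    X i ∈ newtonSpace R S :=
  monomial_mem_newtonSpace (by simpa using hi) 1

lemma newtonSpace_pow_le (hS : Convex ℝ S) (h0 : 0 ∈ S) (n : ℕ) :
    newtonSpace R S ^ n ≤ newtonSpace R ((n : ℝ) • S) := by
  induction n with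
  | zero =>
    rw [pow_zero, Nat.cast_zero, Set.zero_smul_set ⟨0, h0⟩]
    exact one_le_newtonSpace rfl
  | succ n ih =>
    rw [pow_succ, Nat.cast_succ, hS.add_smul n.cast_nonneg zero_le_one, one_smul]
    exact (mul_le_mul_left ih _).trans newtonSpace_mul_le

lemma X_mul_pderiv_mem_newtonSpace {p : MvPolynomial σ R} (hp : p ∈ newtonSpace R S) (i : σ) :
    X i * pderiv i p ∈ newtonSpace R S := by
  rw [p.as_sum, map_sum, Finset.mul_sum]
  refine Submodule.sum_mem _ fun a ha => ?_
  rw [X_mul_pderiv_monomial]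
  exact Submodule.smul_of_tower_mem _ _ (monomial_mem_newtonSpace (hp ha) _)

end CommSemiring

section Finite

variable [Finite σ]

lemma exponentVector_mem_span_basisFun (a : σ →₀ ℕ) :
    exponentVector σ a ∈ Submodule.span ℤ (Set.range (Pi.basisFun ℝ σ)) :=
  (Module.Basis.mem_span_iff_repr_mem ℤ _ _).mpr fun i => ⟨a i, by simp⟩

lemma finite_preimage_exponentVector {S : Set (σ → ℝ)} (hS : Bornology.IsBounded S) :
    (exponentVector σ ⁻¹' S).Finite := by
  have := Fintype.ofFinite σ
  exact ((ZSpan.setFinite_inter (Pi.basisFun ℝ σ) hS).preimage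
    exponentVector_injective.injOn).subset fun a ha => ⟨ha, exponentVector_mem_span_basisFun a⟩

lemma finite_newtonSpace [CommSemiring R] {S : Set (σ → ℝ)} (hS : Bornology.IsBounded S) :
    Module.Finite R (newtonSpace R S) :=
  have := (finite_preimage_exponentVector hS).to_subtype
  .of_basis (basisRestrictSupport R _)

lemma finrank_newtonSpace_smul_le [CommRing R] [Nontrivial R] {S : Set (σ → ℝ)}
    (hS : Bornology.IsBounded S) {n : ℕ} (hn : n ≠ 0) :
    Module.finrank R (newtonSpace R ((n : ℝ) • S)) ≤
      Nat.card ↑(S ∩ (n : ℝ)⁻¹ •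
        (Submodule.span ℤ (Set.range (Pi.basisFun ℝ σ)) : Set (σ → ℝ))) := by
  have := Fintype.ofFinite σ
  have hn' : (n : ℝ) ≠ 0 := Nat.cast_ne_zero.mpr hn
  rw [newtonSpace, Module.finrank_eq_nat_card_basis (basisRestrictSupport R _),
    ← Nat.card_image_of_injective (smul_right_injective (σ → ℝ) hn'), Set.image_smul,
    Set.smul_set_inter₀ hn', smul_inv_smul₀ hn', Nat.card_coe_set_eq, Nat.card_coe_set_eq]
  exact Set.ncard_le_ncard_of_injOn (exponentVector σ)
    (fun a ha => ⟨ha, exponentVector_mem_span_basisFun a⟩) exponentVector_injective.injOn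
    (ZSpan.setFinite_inter _ (hS.smul₀ _))

end Finite

variable [Fintype σ]

lemma le_volume_real_of_eventually_mul_pow_le_card {S : Set (σ → ℝ)}
    (hS : Bornology.IsBounded S) (hmeas : MeasurableSet S) (hfr : volume (frontier S) = 0)
    {c : ℝ} {N : ℕ}
    (h : ∀ᶠ m : ℕ in atTop, c * (m : ℝ) ^ Fintype.card σ ≤ Nat.card ↑(S ∩ ((N + m : ℕ) : ℝ)⁻¹ •
      (Submodule.span ℤ (Set.range (Pi.basisFun ℝ σ)) : Set (σ → ℝ)))) :
    c ≤ volume.real S := by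
  have hlim := (tendsto_card_div_pow_atTop_volume S hS hmeas hfr).comp (tendsto_add_atTop_nat N)
  have hlow : Tendsto (fun m : ℕ => c * ((m : ℝ) / (m + N)) ^ Fintype.card σ) atTop (𝓝 c) := by
    simpa using ((tendsto_natCast_div_add_atTop (N : ℝ)).pow (Fintype.card σ)).const_mul c
  refine le_of_tendsto_of_tendsto hlow hlim ?_
  filter_upwards [h] with m hm
  rw [div_pow, ← mul_div_assoc, Function.comp_apply, add_comm m N, ← Nat.cast_add, add_comm m N]
  gcongr

/-- A bound of Bernstein–Kushnirenko type. -/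
theorem card_nondegenerate_zeros_le {K ι : Type*} [Field K] [Infinite K] [Fintype ι] [DecidableEq σ]
    {W : Set (σ → ℝ)} (hW : Convex ℝ W) (hWc : IsCompact W) (h0 : 0 ∈ W)
    (h1 : ∀ i, Pi.single i 1 ∈ W) {F : σ → MvPolynomial σ K} (hFW : ∀ i, F i ∈ newtonSpace K W)
    {q : ι → σ → K} (hq : Injective q) (hF : ∀ i j, eval (q i) (F j) = 0)
    (hJ : ∀ i, Surjective (jacobianMatrix F (q i)).mulVec) :
    (Fintype.card ι : ℝ) ≤ (Fintype.card σ)! * volume.real W := by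
  have hb := hWc.isBounded
  rw [← div_le_iff₀' (by positivity)]
  refine le_volume_real_of_eventually_mul_pow_le_card hb hWc.measurableSet
    (hW.addHaar_frontier volume) (N := Fintype.card ι) ?_
  filter_upwards [eventually_ne_atTop 0] with m hm
  set n := Fintype.card ι + m
  have := finite_newtonSpace (R := K) hb
  have := finite_newtonSpace (R := K) (hb.smul₀ (n : ℝ))
  calc (Fintype.card ι : ℝ) / (Fintype.card σ)! * (m : ℝ) ^ Fintype.card σ
      = Fintype.card ι * ((m : ℝ) ^ Fintype.card σ / (Fintype.card σ)!) := by ring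
    _ ≤ Fintype.card ι * Module.finrank K (restrictTotalDegree σ K m) := by
      gcongr
      exact pow_div_factorial_le_finrank_restrictTotalDegree m
    _ ≤ Module.finrank K ↥(newtonSpace K W ^ n) := mod_cast
      card_mul_finrank_restrictTotalDegree_le (one_le_newtonSpace h0)
        (fun i => X_mem_newtonSpace (h1 i)) hFW hq hF hJ m
    _ ≤ Module.finrank K (newtonSpace K ((n : ℝ) • W)) := mod_cast
      Submodule.finrank_mono (newtonSpace_pow_le hW h0 n)
    _ ≤ _ := mod_cast finrank_newtonSpace_smul_le hb (by lia)

end NewtonSpace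

section IsolatingNeighbourhoods

variable {E Y ι : Type*} [TopologicalSpace E] [TopologicalSpace Y] [Finite ι]

lemma exists_isClopen_pairwise_disjoint [CompactSpace Y] [T2Space Y] {y : ι → Y}
    (hy : Injective fun i => (y i : ConnectedComponents Y)) :
    ∃ U : ι → Set Y, (∀ i, IsClopen (U i) ∧ y i ∈ U i) ∧ Pairwise (Disjoint on U) := by
  obtain ⟨V, hV, hdisj⟩ := (Set.finite_range fun i => (y i : ConnectedComponents Y)).t2_separation
  choose U hU hyU hUV using fun i => compact_exists_isClopen_in_isOpen (hV (y i)).2 (hV (y i)).1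
  refine ⟨fun i => ConnectedComponents.mk ⁻¹' U i,
    fun i => ⟨(hU i).preimage ConnectedComponents.continuous_coe, hyU i⟩, fun i j hij => ?_⟩
  exact ((hdisj ⟨i, rfl⟩ ⟨j, rfl⟩ (hy.ne hij)).mono (hUV i) (hUV j)).preimage _

lemma exists_isOpen_pairwise_disjoint_disjoint_frontier [T2Space E] {Y : Set E} (hY : IsCompact Y)
    {y : ι → Y} (hy : Injective fun i => (y i : ConnectedComponents Y)) :
    ∃ O : ι → Set E, (∀ i, IsOpen (O i) ∧ ↑(y i) ∈ O i ∧ Disjoint (frontier (O i)) Y) ∧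
      Pairwise (Disjoint on O) := by
  have := isCompact_iff_compactSpace.mp hY
  obtain ⟨U, hU, hdisj⟩ := exists_isClopen_pairwise_disjoint hy
  have hcompact {s : Set Y} (hs : IsClopen s) : IsCompact (Subtype.val '' s) :=
    hs.isClosed.isCompact.image continuous_subtype_val
  choose u v hu hv hUu hUv huv using fun i => SeparatedNhds.of_isCompact_isCompact
    (hcompact (hU i).1) (hcompact (hU i).1.compl)
    ((Set.disjoint_image_iff Subtype.val_injective).mpr disjoint_compl_right)
  have hsub {i j : ι} (hij : i ≠ j) : U j ⊆ (U i)ᶜ := (hdisj hij).symm.subset_compl_right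
  let O (i : ι) : Set E := u i ∩ ⋂ (j) (_ : j ≠ i), v j
  have hO (i : ι) : IsOpen (O i) :=
    (hu i).inter (isOpen_iInter_of_finite fun j => isOpen_iInter_of_finite fun _ => hv j)
  have hUO (i : ι) {x : Y} (hx : x ∈ U i) : ↑x ∈ O i :=
    ⟨hUu i ⟨x, hx, rfl⟩, Set.mem_iInter₂.mpr fun j hj => hUv j ⟨x, hsub hj hx, rfl⟩⟩
  refine ⟨O, fun i => ⟨hO i, hUO i (hU i).2, Set.disjoint_right.mpr fun x hxY hx => ?_⟩,
    fun i j hij => ?_⟩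
  · by_cases hxU : (⟨x, hxY⟩ : Y) ∈ U i
    · exact ((hO i).frontier_eq ▸ hx).2 (hUO i hxU)
    · exact (((huv i).mono_left Set.inter_subset_left).closure_left (hv i)).notMem_of_mem_left
        (frontier_subset_closure hx) (hUv i ⟨⟨x, hxY⟩, hxU, rfl⟩)
  · exact (huv i).mono Set.inter_subset_left fun x hx => Set.mem_iInter₂.mp hx.2 i hij

end IsolatingNeighbourhoods

section PerturbedMinima

variable {E A ι : Type*} [TopologicalSpace E] [TopologicalSpace A]

lemma injective_connectedComponents_mk_of_comp {X Y : Type*} [TopologicalSpace X]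
    [TopologicalSpace Y] {F : Y → X} (hF : Continuous F) {y : ι → Y}
    (hy : Injective fun i => (F (y i) : ConnectedComponents X)) :
    Injective fun i => (y i : ConnectedComponents Y) :=
  Injective.of_comp (f := hF.connectedComponentsMap) hy

lemma eventually_forall_mem_lt {K : Set E} (hK : IsCompact K) {f₁ f₂ : A → E → ℝ}
    (hf₁ : Continuous f₁.uncurry) (hf₂ : Continuous f₂.uncurry) {a₀ : A}
    (h : ∀ w ∈ K, f₁ a₀ w < f₂ a₀ w) : ∀ᶠ a in 𝓝 a₀, ∀ w ∈ K, f₁ a w < f₂ a w :=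
  hK.eventually_forall_of_forall_eventually fun w hw =>
    (hf₁.tendsto (a₀, w)).eventually_lt (hf₂.tendsto (a₀, w)) (h w hw)

lemma exists_pos_forall_mem_mul_lt {K : Set E} (hK : IsCompact K) {g : E → ℝ} (hg : Continuous g)
    (hpos : ∀ w ∈ K, 0 < g w) (r : ℝ) : ∃ ε > 0, ∀ w ∈ K, ε * r < g w := by
  have hev : ∀ᶠ ε in 𝓝 (0 : ℝ), ∀ w ∈ K, ε * r < g w :=
    eventually_forall_mem_lt (f₁ := fun ε _ => ε * r) (f₂ := fun _ w => g w) hK (by fun_prop)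
      (by fun_prop) (by simpa using hpos)
  obtain ⟨ε, hlt, hε⟩ := ((hev.filter_mono nhdsWithin_le_nhds).and
    (self_mem_nhdsWithin (s := Set.Ioi 0))).exists
  exact ⟨ε, hε, hlt⟩

lemma eventually_exists_isLocalMin {O K : Set E} (hO : IsOpen O) (hK : IsCompact K) (hOK : O ⊆ K)
    {G : A → E → ℝ} (hG : Continuous G.uncurry) {a₀ : A} {p : E} (hp : p ∈ K)
    (h : ∀ w ∈ K \ O, G a₀ p < G a₀ w) :
    ∀ᶠ a in 𝓝 a₀, ∃ q ∈ O, IsLocalMin (G a) q := by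
  filter_upwards [eventually_forall_mem_lt (f₁ := fun a _ => G a p) (hK.diff hO) (by fun_prop)
    hG h] with a ha
  exact hK.exists_isLocalMin_mem_open hOK (by fun_prop) hp ha hO

theorem exists_eventually_exists_isLocalMin_add_mul [T2Space E] [Finite ι] {g : E → ℝ}
    (hg : Continuous g) (hg0 : ∀ w, 0 ≤ g w) {Q : A → E → ℝ} (hQ : Continuous Q.uncurry) {a₀ : A}
    (hQ0 : ∀ w, 0 ≤ Q a₀ w) (hQc : ∀ R, IsCompact {w | Q a₀ w ≤ R}) {p : ι → g ⁻¹' {0}}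
    (hp : Injective fun i => (p i : ConnectedComponents (g ⁻¹' {0}))) :
    ∃ ε > 0, ∀ᶠ a in 𝓝 a₀, ∃ q : ι → E, Injective q ∧
      ∀ i, IsLocalMin (fun w => g w + ε * Q a w) (q i) := by
  obtain ⟨R, hR⟩ : ∃ R, ∀ i, Q a₀ (p i) < R := by
    obtain ⟨R, hR⟩ := (Set.finite_range fun i => Q a₀ (p i)).bddAbove
    exact ⟨R + 1, fun i => (hR ⟨i, rfl⟩).trans_lt (lt_add_one R)⟩
  have hQa₀ : Continuous (Q a₀) := by fun_prop
  have hgz : IsClosed (g ⁻¹' {0}) := isClosed_singleton.preimage hg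
  set B := {w | Q a₀ w ≤ R}
  obtain ⟨O, hO, hdisj⟩ := exists_isOpen_pairwise_disjoint_disjoint_frontier
    ((hQc R).inter_left hgz) (y := fun i => ⟨p i, (p i).2, (hR i).le⟩)
    (injective_connectedComponents_mk_of_comp (continuous_inclusion Set.inter_subset_left) hp)
  choose hO hpO hfr using hO
  obtain ⟨ε, hε, hεg⟩ := exists_pos_forall_mem_mul_lt (K := B ∩ ⋃ i, frontier (O i))
    ((hQc R).inter_right (isClosed_iUnion_of_finite fun i => isClosed_frontier)) hg
    (fun w ⟨hwB, hw⟩ => (hg0 w).lt_of_ne' fun hw0 =>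
      have ⟨i, hi⟩ := Set.mem_iUnion.mp hw
      Set.disjoint_left.mp (hfr i) hi ⟨hw0, hwB⟩) R
  refine ⟨ε, hε, ?_⟩
  have hev (i : ι) : ∀ᶠ a in 𝓝 a₀, ∃ q ∈ O i ∩ {w | Q a₀ w < R},
      IsLocalMin (fun w => g w + ε * Q a w) q := by
    refine eventually_exists_isLocalMin (K := closure (O i) ∩ B)
      ((hO i).inter (isOpen_lt hQa₀ continuous_const)) ((hQc R).inter_left isClosed_closure)
      (Set.inter_subset_inter subset_closure fun w (hw : Q a₀ w < R) => hw.le) (by fun_prop)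
      ⟨subset_closure (hpO i), (hR i).le⟩ fun w ⟨⟨hwcl, hwB⟩, hw⟩ => ?_
    have hlt : ε * Q a₀ (p i) < ε * R := mul_lt_mul_of_pos_left (hR i) hε
    rw [show g (p i) = 0 from (p i).2, zero_add]
    by_cases hwO : w ∈ O i
    · have : R ≤ Q a₀ w := not_lt.mp fun h => hw ⟨hwO, h⟩
      have : ε * R ≤ ε * Q a₀ w := by gcongr
      linarith [hg0 w]
    · have := hεg w ⟨hwB, Set.mem_iUnion.mpr ⟨i, (hO i).frontier_eq ▸ ⟨hwcl, hwO⟩⟩⟩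
      linarith [mul_nonneg hε.le (hQ0 w)]
  filter_upwards [eventually_all.mpr hev] with a ha
  choose q hqO hq using ha
  exact ⟨q, fun i j hij => hdisj.eq (Set.not_disjoint_iff.mpr
    ⟨q i, (hqO i).1, hij ▸ (hqO j).1⟩), hq⟩

end PerturbedMinima

section Calculus

lemma hasFDerivAt_eval [Fintype σ] (p : MvPolynomial σ ℝ) (x : σ → ℝ) :
    HasFDerivAt (fun w => eval w p)
      (∑ i, eval x (pderiv i p) • (ContinuousLinearMap.proj i : (σ → ℝ) →L[ℝ] ℝ)) x := by
  classical
  induction p using MvPolynomial.induction_on with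
  | C a => simpa using hasFDerivAt_const a x
  | add p q hp hq =>
    simp only [map_add, add_smul, Finset.sum_add_distrib]
    exact hp.add hq
  | mul_X p j hp =>
    have hmul := hp.mul (hasFDerivAt_apply (𝕜 := ℝ) j x)
    simp only [map_mul, eval_X]
    convert! hmul using 1
    simp [Derivation.leibniz, pderiv_X, Pi.single_apply, add_smul, Finset.sum_add_distrib,
      Finset.smul_sum, mul_smul, apply_ite]

lemma eval_pderiv_eq_zero_of_isLocalMin [Finite σ] {p : MvPolynomial σ ℝ} {x : σ → ℝ}
    (h : IsLocalMin (fun w => eval w p) x) (i : σ) : eval x (pderiv i p) = 0 := by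
  classical
  have := Fintype.ofFinite σ
  simpa [Pi.single_apply] using
    DFunLike.congr_fun (h.hasFDerivAt_eq_zero (hasFDerivAt_eval p x)) (Pi.single i 1)

variable [Fintype σ]

lemma hasFDerivAt_pi_eval [DecidableEq σ] (F : σ → MvPolynomial σ ℝ) (x : σ → ℝ) :
    HasFDerivAt (fun w i => eval w (F i))
      (Matrix.toLin' (jacobianMatrix F x)).toContinuousLinearMap x := by
  refine hasFDerivAt_pi'.mpr fun j => (hasFDerivAt_eval (F j) x).congr_fderiv ?_
  ext v
  simp [jacobianMatrix, Matrix.mulVec, dotProduct]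

lemma ae_forall_isUnit_jacobianMatrix [DecidableEq σ] (F : σ → MvPolynomial σ ℝ) :
    ∀ᵐ a : σ → ℝ, ∀ w, (∀ i, eval w (F i) = a i) → IsUnit (jacobianMatrix F w) := by
  have hnull := addHaar_image_eq_zero_of_det_fderivWithin_eq_zero volume
    (s := {w | (jacobianMatrix F w).det = 0})
    (fun w _ => (hasFDerivAt_pi_eval F w).hasFDerivWithinAt) (fun w hw => by simpa using hw)
  filter_upwards [measure_eq_zero_iff_ae_notMem.mp hnull] with a ha w hw
  rw [Matrix.isUnit_iff_isUnit_det, isUnit_iff_ne_zero]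
  exact fun hdet => ha ⟨w, hdet, _root_.funext hw⟩

lemma ae_forall_coord_ne_zero (F : σ → MvPolynomial σ ℝ) :
    ∀ᵐ a : σ → ℝ, ∀ w, (∀ i, eval w (F i) = a i) → ∀ j, w j ≠ 0 := by
  classical
  have hnull (j : σ) := addHaar_image_eq_zero_of_differentiableOn_of_addHaar_eq_zero volume
    (fun w _ => (hasFDerivAt_pi_eval F w).differentiableAt.differentiableWithinAt)
    (Measure.pi_hyperplane (fun _ : σ => (volume : Measure ℝ)) j 0)
  filter_upwards [ae_all_iff.mpr fun j => measure_eq_zero_iff_ae_notMem.mp (hnull j)]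
    with a ha w hw j hj
  exact ha j ⟨w, hj, _root_.funext hw⟩

lemma isCompact_setOf_sum_sub_sq_le (a : σ → ℝ) (R : ℝ) :
    IsCompact {w : σ → ℝ | ∑ i, (w i - a i) ^ 2 ≤ R} := by
  refine (isCompact_closedBall a (√R)).of_isClosed_subset
    (isClosed_le (by fun_prop) continuous_const) fun w hw => ?_
  refine (dist_pi_le_iff (Real.sqrt_nonneg R)).mpr fun i => Real.abs_le_sqrt ?_
  exact (Finset.single_le_sum (f := fun i => (w i - a i) ^ 2) (fun i _ => sq_nonneg _)
    (Finset.mem_univ i)).trans hw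

end Calculus

section Perturbation

/-- The gradient map of `∑ i, w i ^ 2 / 2 + g / (2ε)`. If `ε ≠ 0`, it takes the value `a`
exactly at the critical points of `g + ε ∑ i, (w i - a i) ^ 2`. -/
noncomputable def perturbedGradient (g : MvPolynomial σ ℝ) (ε : ℝ) (i : σ) : MvPolynomial σ ℝ :=
  X i + C (2 * ε)⁻¹ * pderiv i g

lemma eval_perturbedGradient_of_isLocalMin [Fintype σ] {g : MvPolynomial σ ℝ} {ε : ℝ} (hε : ε ≠ 0)
    {a q : σ → ℝ} (h : IsLocalMin (fun w => eval w g + ε * ∑ j, (w j - a j) ^ 2) q) (i : σ) :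
    eval q (perturbedGradient g ε i) = a i := by
  classical
  have hcrit : eval q (pderiv i g) + ε * (2 * (q i - a i)) = 0 := by
    rw [← eval_pderiv_eq_zero_of_isLocalMin (p := g + C ε * ∑ j, (X j - C (a j)) ^ 2)
      (by simpa using h) i]
    simp [Derivation.leibniz, Derivation.leibniz_pow, pderiv_X, Pi.single_apply]
  rw [perturbedGradient]
  simp only [map_add, map_mul, eval_X, eval_C, eq_neg_of_add_eq_zero_left hcrit]
  field_simp
  ring

lemma jacobianMatrix_X_mul_sub_C [CommRing R] [Fintype σ] [DecidableEq σ]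
    {F : σ → MvPolynomial σ R} {a q : σ → R} (h : ∀ i, eval q (F i) = a i) :
    jacobianMatrix (fun i => X i * (F i - C (a i))) q =
      Matrix.diagonal q * jacobianMatrix F q := by
  ext i j
  simp [jacobianMatrix, Matrix.diagonal_mul, Derivation.leibniz, h]

lemma X_mul_perturbedGradient_sub_C_mem_newtonSpace [DecidableEq σ] {g : MvPolynomial σ ℝ}
    {W : Set (σ → ℝ)} (hg : g ∈ newtonSpace ℝ W) {i : σ} (h1 : Pi.single i 1 ∈ W)
    (h2 : Pi.single i 2 ∈ W) (ε c : ℝ) :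
    X i * (perturbedGradient g ε i - C c) ∈ newtonSpace ℝ W := by
  have hXX : X i ^ 2 ∈ newtonSpace ℝ W := by
    rw [X_pow_eq_monomial]
    exact monomial_mem_newtonSpace (by simpa using h2) 1
  have hsplit : X i * (perturbedGradient g ε i - C c) =
      X i ^ 2 + (2 * ε)⁻¹ • (X i * pderiv i g) - c • X i := by
    simp only [perturbedGradient, smul_eq_C_mul]
    ring
  rw [hsplit]
  exact sub_mem (add_mem hXX (Submodule.smul_mem _ _ (X_mul_pderiv_mem_newtonSpace hg i)))
    (Submodule.smul_mem _ _ (X_mem_newtonSpace h1))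

lemma exists_generic_solutions_perturbedGradient [Fintype σ] [DecidableEq σ] {ι : Type*} [Finite ι]
    {g : MvPolynomial σ ℝ} (hg : ∀ w, 0 ≤ eval w g) {p : ι → (fun w => eval w g) ⁻¹' {0}}
    (hp : Injective fun i => (p i : ConnectedComponents ((fun w => eval w g) ⁻¹' {0}))) :
    ∃ (ε : ℝ) (a : σ → ℝ) (q : ι → σ → ℝ), Injective q ∧ ∀ i,
      (∀ j, eval (q i) (perturbedGradient g ε j) = a j) ∧ (∀ j, q i j ≠ 0) ∧
        IsUnit (jacobianMatrix (perturbedGradient g ε) (q i)) := by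
  have hQ : Continuous fun x : (σ → ℝ) × (σ → ℝ) => ∑ j, (x.2 j - x.1 j) ^ 2 := by fun_prop
  obtain ⟨ε, hε, hmin⟩ := exists_eventually_exists_isLocalMin_add_mul (E := σ → ℝ)
    (A := σ → ℝ) (g := fun w => eval w g) (continuous_eval g) hg
    (Q := fun a w => ∑ j, (w j - a j) ^ 2) hQ (a₀ := 0)
    (fun w => Finset.sum_nonneg fun j _ => sq_nonneg _) (isCompact_setOf_sum_sub_sq_le 0) hp
  have hgen := (ae_forall_isUnit_jacobianMatrix (perturbedGradient g ε)).and
    (ae_forall_coord_ne_zero (perturbedGradient g ε))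
  obtain ⟨a, ⟨hJ, h0⟩, q, hq, hqmin⟩ := (Measure.dense_of_ae hgen).inter_nhds_nonempty hmin
  have hqa (i : ι) := eval_perturbedGradient_of_isLocalMin hε.ne' (hqmin i)
  exact ⟨ε, a, q, hq, fun i => ⟨hqa i, h0 _ (hqa i), hJ _ (hqa i)⟩⟩

end Perturbation

section Components

lemma finite_and_card_le_of_forall_finset_card_le {α : Type*} {c : ℝ}
    (h : ∀ s : Finset α, (s.card : ℝ) ≤ c) : Finite α ∧ (Nat.card α : ℝ) ≤ c := by
  have hfin : Finite α := by
    by_contra hinf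
    have := not_finite_iff_infinite.mp hinf
    obtain ⟨n, hn⟩ := exists_nat_gt c
    obtain ⟨s, rfl⟩ := Infinite.exists_subset_card_eq α n
    exact hn.not_ge (h s)
  have := Fintype.ofFinite α
  exact ⟨hfin, by simpa [Nat.card_eq_fintype_card] using h Finset.univ⟩

lemma preimage_eval_eq_preimage_eval_sum_sq [Fintype τ] (θ : τ → MvPolynomial σ ℝ) (y : τ → ℝ) :
    (fun w j => eval w (θ j)) ⁻¹' {y} =
      (fun w => eval w (∑ j, (θ j - C (y j)) ^ 2)) ⁻¹' {0} := by
  ext w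
  simp [Finset.sum_eq_zero_iff_of_nonneg, sq_nonneg, sub_eq_zero, funext_iff]

variable [Fintype σ] [DecidableEq σ]

lemma card_le_of_injective_connectedComponents_mk {ι : Type*} [Fintype ι] {W : Set (σ → ℝ)}
    (hW : Convex ℝ W) (hWc : IsCompact W) (h0 : 0 ∈ W) (h2 : ∀ i, Pi.single i 2 ∈ W)
    {g : MvPolynomial σ ℝ} (hgW : g ∈ newtonSpace ℝ W) (hg : ∀ w, 0 ≤ eval w g)
    {p : ι → (fun w => eval w g) ⁻¹' {0}}
    (hp : Injective fun i => (p i : ConnectedComponents ((fun w => eval w g) ⁻¹' {0}))) :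
    (Fintype.card ι : ℝ) ≤ (Fintype.card σ)! * volume.real W := by
  have h1 (i : σ) : Pi.single i 1 ∈ W := by
    have hhalf : (2⁻¹ : ℝ) • Pi.single i (2 : ℝ) = (Pi.single i 1 : σ → ℝ) := by
      simp [← Pi.single_smul]
    exact hhalf ▸ hW.smul_mem_of_zero_mem h0 (h2 i) ⟨by norm_num, by norm_num⟩
  obtain ⟨ε, a, q, hq, hsol⟩ := exists_generic_solutions_perturbedGradient hg hp
  refine card_nondegenerate_zeros_le hW hWc h0 h1
    (fun i => X_mul_perturbedGradient_sub_C_mem_newtonSpace hgW (h1 i) (h2 i) ε (a i)) hq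
    (fun i j => by simp [(hsol i).1 j]) fun i => ?_
  obtain ⟨hqa, hne, hJ⟩ := hsol i
  rw [jacobianMatrix_X_mul_sub_C hqa, Matrix.mulVec_surjective_iff_isUnit]
  exact (Matrix.isUnit_diagonal.mpr (Pi.isUnit_iff.mpr fun j => (hne j).isUnit)).mul hJ

theorem finite_and_card_connectedComponents_le_of_nonneg {W : Set (σ → ℝ)}
    (hW : Convex ℝ W) (hWc : IsCompact W) (h0 : 0 ∈ W) (h2 : ∀ i, Pi.single i 2 ∈ W)
    {g : MvPolynomial σ ℝ} (hgW : g ∈ newtonSpace ℝ W) (hg : ∀ w, 0 ≤ eval w g) :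
    Finite (ConnectedComponents ((fun w => eval w g) ⁻¹' {0})) ∧
      (Nat.card (ConnectedComponents ((fun w => eval w g) ⁻¹' {0})) : ℝ) ≤
        (Fintype.card σ)! * volume.real W := by
  refine finite_and_card_le_of_forall_finset_card_le fun s => ?_
  choose p hp using fun c : s => ConnectedComponents.surjective_coe c.1
  simpa using card_le_of_injective_connectedComponents_mk hW hWc h0 h2 hgW hg (p := p)
    (by simpa only [hp] using Subtype.val_injective)

theorem finite_and_card_connectedComponents_le_of_mem_newtonSpace [Finite τ] {V : Set (σ → ℝ)}
    (hV : Convex ℝ V) (hVc : IsCompact V) (h0 : 0 ∈ V) (h1 : ∀ i, Pi.single i 1 ∈ V)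
    {θ : τ → MvPolynomial σ ℝ} (hθ : ∀ j, θ j ∈ newtonSpace ℝ V) (y : τ → ℝ) :
    Finite (ConnectedComponents ((fun w j => eval w (θ j)) ⁻¹' {y})) ∧
      (Nat.card (ConnectedComponents ((fun w j => eval w (θ j)) ⁻¹' {y})) : ℝ≥0∞) ≤
        2 ^ Fintype.card σ * (Fintype.card σ)! * volume V := by
  have := Fintype.ofFinite τ
  have hgV : ∑ j, (θ j - C (y j)) ^ 2 ∈ newtonSpace ℝ ((2 : ℝ) • V) :=
    Submodule.sum_mem _ fun j _ => newtonSpace_pow_le hV h0 2 <|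
      Submodule.pow_mem_pow _ (sub_mem (hθ j) (C_mem_newtonSpace h0 _)) 2
  have h2 (i : σ) : Pi.single i 2 ∈ (2 : ℝ) • V := ⟨Pi.single i 1, h1 i, by simp [← Pi.single_smul]⟩
  have h0' : 0 ∈ (2 : ℝ) • V := ⟨0, h0, smul_zero 2⟩
  have hvol : volume ((2 : ℝ) • V) = 2 ^ Fintype.card σ * volume V := by
    simp [Measure.addHaar_smul]
  have hfin : volume ((2 : ℝ) • V) ≠ ∞ := (hVc.smul (2 : ℝ)).measure_lt_top.ne
  rw [preimage_eval_eq_preimage_eval_sum_sq]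
  refine (finite_and_card_connectedComponents_le_of_nonneg (hV.smul 2) (hVc.smul 2) h0' h2 hgV
    fun w => by simpa using Finset.sum_nonneg fun j _ => sq_nonneg _).imp_right fun hle => ?_
  rw [mul_right_comm, ← hvol, mul_comm, ← ENNReal.ofReal_natCast, ← ENNReal.ofReal_natCast (_ !)]
  rw [← ENNReal.ofReal_toReal hfin, ← ENNReal.ofReal_mul (by positivity)]
  exact ENNReal.ofReal_le_ofReal hle

end Components

end

theorem rojas_bound_connected_components_general {σ τ : Type*} [Fintype σ] [DecidableEq σ]
    [Finite τ] (θ : τ → MvPolynomial σ ℝ) (y : τ → ℝ) :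
    Finite (ConnectedComponents ((fun w j => MvPolynomial.eval w (θ j)) ⁻¹' {y})) ∧
      (Nat.card (ConnectedComponents ((fun w j => MvPolynomial.eval w (θ j)) ⁻¹' {y})) : ℝ≥0∞) ≤
        2 ^ Fintype.card σ * (Fintype.card σ).factorial * volume (convexHull ℝ
          (({0} ∪ Set.range fun i : σ => Pi.single i (1 : ℝ)) ∪
            {v : σ → ℝ | ∃ j, ∃ m ∈ (θ j).support, v = fun i => (m i : ℝ)})) := by
  have hfin : {v : σ → ℝ | ∃ j, ∃ m ∈ (θ j).support, v = fun i => (m i : ℝ)}.Finite := by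
    refine (Set.finite_iUnion fun j =>
      (θ j).support.finite_toSet.image (exponentVector σ)).subset ?_
    rintro _ ⟨j, m, hm, rfl⟩
    exact Set.mem_iUnion.mpr ⟨j, m, hm, rfl⟩
  exact finite_and_card_connectedComponents_le_of_mem_newtonSpace (convex_convexHull ℝ _)
    ((((Set.finite_singleton 0).union (Set.finite_range _)).union hfin).isCompact_convexHull ℝ)
    (subset_convexHull ℝ _ (Or.inl (Or.inl rfl)))
    (fun i => subset_convexHull ℝ _ (Or.inl (Or.inr ⟨i, rfl⟩)))
    (fun j m hm => subset_convexHull ℝ _ (Or.inr ⟨j, m, hm, rfl⟩)) y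

/-- Rojas' bound: Let `V ⊆ ℝ^k` be the convex hull of the union of
`{O, e₁, …, e_k}` with the set of exponent vectors of monomials appearing in some `θ_j`.
If `y` is a regular value of `f = (θ₁, …, θ_r)`, then `f⁻¹(y)` has at most
`2^k · k! · vol_k(V)` connected components. -/
theorem rojas_bound_connected_components
    (k r : ℕ)
    (θ : Fin r → MvPolynomial (Fin k) ℝ)
    (V : Set (Fin k → ℝ))
    (hV : V = convexHull ℝ
      (({0} ∪ Set.range (fun i : Fin k => Pi.single i (1 : ℝ))) ∪
        {v : Fin k → ℝ | ∃ j : Fin r, ∃ m ∈ (θ j).support, v = fun i => (m i : ℝ)}))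
    (f : (Fin k → ℝ) → (Fin r → ℝ))
    (hf : ∀ w j, f w j = MvPolynomial.eval w (θ j))
    (y : Fin r → ℝ)
    (hreg : ∀ x ∈ f ⁻¹' {y}, Function.Surjective (fderiv ℝ f x)) :
    Finite (ConnectedComponents ↥(f ⁻¹' {y})) ∧
      (Nat.card (ConnectedComponents ↥(f ⁻¹' {y})) : ℝ≥0∞) ≤
        2 ^ k * (Nat.factorial k) * volume V := by
  subst hV
  obtain rfl : f = fun w j => MvPolynomial.eval w (θ j) := funext fun w => funext (hf w)
  simpa only [Fintype.card_fin] using rojas_bound_connected_components_general θ y
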